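/- Let k be a field and let γ(x) be an existential ring formula such that k(t) ⊨ γ(b) for every b ∈ k and k(t) ⊭ γ(t) (that is, k ⊆ γ(k(t)) ⊆ k(t) \ {t}). Then for every existential ring formula ψ(u₁,…,uₙ, w) and all a₁,…,aₙ ∈ k: k(t) ⊨ ψ(a₁,…,aₙ, t) if and only if k(t) ⊨ ∀x (ψ(a₁,…,aₙ, x) ∨ γ(x)). -/

import Mathlib

/-!
Existential formulas are preserved by embeddings. Every `x ∈ k(t) ∖ k` is transcendental over `k`,
so `t ↦ x` extends to a `k`-embedding of `k(t)` into itself, which carries `ψ(a, t)` to `ψ(a, x)`;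
at the remaining points `x ∈ k` the disjunct `γ(x)` holds. Conversely `γ(t)` fails, so the
disjunction at `x = t` gives `ψ(a, t)`.
-/

open FirstOrder Language

attribute [local instance] FirstOrder.Ring.compatibleRingOfRing

section Existential

variable {L : Language} {α : Type*}

theorem isExistential_exs :
    ∀ {n : ℕ} {φ : L.BoundedFormula α n}, φ.IsExistential → φ.exs.IsExistential
  | 0, _, hφ => hφ
  | _ + 1, φ, hφ => isExistential_exs (φ := φ.ex) hφ.ex

variable {R S : Type*} [NonAssocRing R] [NonAssocRing S]
  [Ring.CompatibleRing R] [Ring.CompatibleRing S]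

/-- An injective ring homomorphism, as an embedding of structures in the language of rings. -/
def ringEmbeddingOfInjective (f : R →+* S) (hf : Function.Injective f) : R ↪[Language.ring] S where
  toFun := f
  inj' := hf
  map_fun' g _ := by cases g <;> simp
  map_rel' r := by cases r

theorem realize_comp_of_isExistential {φ : Language.ring.Formula α} (hφ : φ.IsExistential)
    {f : R →+* S} (hf : Function.Injective f) {v : α → R} (h : φ.Realize v) :
    φ.Realize (f ∘ v) := by
  have h' := hφ.realize_embedding (ringEmbeddingOfInjective f hf) h
  rwa [Subsingleton.elim (_ ∘ default) default] at h'

end Existential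

section RatFunc

variable {k : Type*} [Field k]

theorem exists_algHom_X_eq_of_transcendental {K : Type*} [Field K] [Algebra k K] {x : K}
    (hx : Transcendental k x) : ∃ f : RatFunc k →ₐ[k] K, f RatFunc.X = x :=
  ⟨(IntermediateField.val _).comp (RatFunc.algEquivOfTranscendental x hx).toAlgHom, by simp⟩

theorem realize_of_realize_X_of_transcendental {K : Type*} [Field K] [Algebra k K] {x : K}
    (hx : Transcendental k x) {α : Type*} {φ : Language.ring.Formula (α ⊕ Unit)}
    (hφ : φ.IsExistential) {a : α → k}
    (h : φ.Realize (Sum.elim (fun i => algebraMap k (RatFunc k) (a i)) (fun _ => RatFunc.X))) :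
    φ.Realize (Sum.elim (fun i => algebraMap k K (a i)) (fun _ => x)) := by
  obtain ⟨f, hfX⟩ := exists_algHom_X_eq_of_transcendental hx
  have hf : f ∘ Sum.elim (fun i => algebraMap k (RatFunc k) (a i)) (fun _ : Unit => RatFunc.X) =
      Sum.elim (fun i => algebraMap k K (a i)) (fun _ => x) := by
    rw [Sum.comp_elim]
    congr 1 <;> funext i
    · exact f.commutes (a i)
    · exact hfX
  exact hf ▸ realize_comp_of_isExistential hφ (f := f.toRingHom) f.injective h

theorem transcendental_of_notMem_range_algebraMap {x : RatFunc k}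
    (hx : x ∉ Set.range (algebraMap k (RatFunc k))) : Transcendental k x :=
  x.transcendental_of_ne_C fun ⟨c, hc⟩ => hx ⟨c, hc.symm⟩

end RatFunc

theorem stmt15_general {k : Type*} [Field k] {S : Set (RatFunc k)}
    (hkS : Set.range (algebraMap k (RatFunc k)) ⊆ S) (htS : RatFunc.X ∉ S)
    {α : Type*} {φ : Language.ring.Formula (α ⊕ Unit)} (hφ : φ.IsExistential) (a : α → k) :
    φ.Realize (Sum.elim (fun i => algebraMap k (RatFunc k) (a i)) (fun _ => RatFunc.X)) ↔
      ∀ x : RatFunc k,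
        φ.Realize (Sum.elim (fun i => algebraMap k (RatFunc k) (a i)) (fun _ => x)) ∨ x ∈ S := by
  refine ⟨fun h x => ?_, fun h => (h RatFunc.X).resolve_right htS⟩
  by_cases hx : x ∈ S
  · exact Or.inr hx
  · have hx' : Transcendental k x :=
      transcendental_of_notMem_range_algebraMap fun hxk => hx (hkS hxk)
    exact Or.inl (realize_of_realize_X_of_transcendental hx' hφ h)

/-- let `k` be a field and `γ(x)` an existential ring formula with
`k ⊆ γ(k(t)) ⊆ k(t) \ {t}`.  Then for every existential ring formula `ψ(u₁, …, uₙ, w)` and all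
`a₁, …, aₙ ∈ k`: `k(t) ⊨ ψ(a⃗, t)` iff `k(t) ⊨ ∀ x (ψ(a⃗, x) ∨ γ(x))`. -/
theorem stmt15 (k : Type*) [Field k]
    (sγ : ℕ) (γ : Language.ring.BoundedFormula Unit sγ) (hγ : γ.IsQF)
    (hγk : ∀ b : k, (γ.exs : Language.ring.Formula _).Realize
      (fun _ : Unit => algebraMap k (RatFunc k) b))
    (hγt : ¬ (γ.exs : Language.ring.Formula _).Realize
      (fun _ : Unit => (RatFunc.X : RatFunc k)))
    (n s : ℕ) (ψ : Language.ring.BoundedFormula (Fin n ⊕ Unit) s) (hψ : ψ.IsQF)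
    (a : Fin n → k) :
    (ψ.exs : Language.ring.Formula _).Realize
        (Sum.elim (fun i => algebraMap k (RatFunc k) (a i))
          (fun _ : Unit => (RatFunc.X : RatFunc k))) ↔
      ∀ x : RatFunc k,
        (ψ.exs : Language.ring.Formula _).Realize
            (Sum.elim (fun i => algebraMap k (RatFunc k) (a i)) (fun _ : Unit => x)) ∨
          (γ.exs : Language.ring.Formula _).Realize (fun _ : Unit => x) := by
  exact stmt15_general (S := {x | γ.exs.Realize fun _ => x}) (Set.range_subset_iff.2 hγk) hγt
    (isExistential_exs hψ.isExistential) a
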